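/- arXiv:2012.08376 — 2 statements merged into one kernel-verified Lean document; each statement's English description precedes it below -/
import Mathlib

section
/- Let f and g be slice regular functions on a symmetric domain in ℍ and let k ≥ 1. Then (∂_c∂_s)^k(f·g) = ((∂_c∂_s)^k f)·(v_s g) + (v_s f)·((∂_c∂_s)^k g) + (1/2){ Σ_{h=0}^{k−1} C(k−1,h)[(∂_s(∂_c∂_s)^{k−(h+1)} f)·(∂_c(∂_s∂_c)^h g) + (∂_c(∂_s∂_c)^h f)·(∂_s(∂_c∂_s)^{k−(h+1)} g)] + Σ_{h=1}^{k−1} C(k−1,h)[((∂_c∂_s)^{k−h} f)·((∂_s∂_c)^h g) + ((∂_s∂_c)^h f)·((∂_c∂_s)^{k−h} g)] }. -/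
noncomputable section

open Quaternion

abbrev ℍq := Quaternion ℝ

/-- Spherical value of a function of a quaternionic variable. -/
def svalue (f : ℍq → ℍq) (x : ℍq) : ℍq := (f x + f (star x)) / 2

/-- Spherical derivative of a function of a quaternionic variable. -/
def sderiv' (f : ℍq → ℍq) (x : ℍq) : ℍq := (2 * x.im)⁻¹ * (f x - f (star x))

/-- The imaginary unit `Im(x)/|Im(x)|` attached to a (non-real) quaternion. -/
def qJ (x : ℍq) : ℍq := (‖x.im‖)⁻¹ • x.im

/-- Slice (Cullen) derivative `∂_c f = (1/2)(∂/∂α − I ∂/∂β) f` at `x = α + Iβ`. -/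
def cderiv (f : ℍq → ℍq) (x : ℍq) : ℍq :=
  (1/2 : ℝ) • (fderiv ℝ f x 1 - qJ x * fderiv ℝ f x (qJ x))

/-- The conjugate operator `∂̄_c f = (1/2)(∂/∂α + I ∂/∂β) f`. -/
def cderivBar (f : ℍq → ℍq) (x : ℍq) : ℍq :=
  (1/2 : ℝ) • (fderiv ℝ f x 1 + qJ x * fderiv ℝ f x (qJ x))

/-- A circular (axially symmetric) subset of the quaternions. -/
def IsCircular (Ω : Set ℍq) : Prop :=
  ∀ x ∈ Ω, ∀ y : ℍq, y.re = x.re → ‖y.im‖ = ‖x.im‖ → y ∈ Ω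

/-- A slice function on `Ω`: it is determined by the representation formula
`f(α + Iβ) = F₀(α,β) + I F₁(α,β)` with `F₀ = v_s f`, `F₁ = β ∂_s f`. -/
def IsSlice (Ω : Set ℍq) (f : ℍq → ℍq) : Prop :=
  ∀ x ∈ Ω, ∀ y ∈ Ω, x.re = y.re → ‖x.im‖ = ‖y.im‖ →
    f x = svalue f y + x.im * sderiv' f y

/-- A slice regular function on a circular domain: a real-differentiable slice
function whose stem function is holomorphic, i.e. `∂̄_c f = 0` off the reals. -/
def IsSliceRegular (Ω : Set ℍq) (f : ℍq → ℍq) : Prop :=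
  IsSlice Ω f ∧ DifferentiableOn ℝ f Ω ∧ ∀ x ∈ Ω, x.im ≠ 0 → cderivBar f x = 0

/-- Pointwise formula for the slice product `f·g = 𝓘(FG)` of two slice functions. -/
def sprod (f g : ℍq → ℍq) (x : ℍq) : ℍq :=
  svalue f x * svalue g x + x.im * x.im * (sderiv' f x * sderiv' g x)
    + x.im * (svalue f x * sderiv' g x + sderiv' f x * svalue g x)

/-- Characteristic polynomial of `q₀`: `Δ_{q₀}(x) = x² − 2 Re(q₀) x + |q₀|²`. -/
def Delta (q₀ : ℍq) (x : ℍq) : ℍq := x ^ 2 - 2 * (q₀.re : ℍq) * x + ((‖q₀‖ ^ 2 : ℝ) : ℍq)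

/-- The operator `∂_c ∂_s`. -/
def opCS (f : ℍq → ℍq) : ℍq → ℍq := cderiv (sderiv' f)

/-- The operator `∂_s ∂_c`. -/
def opSC (f : ℍq → ℍq) : ℍq → ℍq := sderiv' (cderiv f)

/-!
The spherical value and the spherical derivative of any function are invariant under quaternionic
conjugation, and on conjugation-invariant functions `∂_s ∂_c` is the derivative along the vector
field `(2 Im x)⁻¹`, hence a derivation for the pointwise product. Therefore
`(∂_c ∂_s)^(n+1) (f·g) = ∂_c (∂_s ∂_c)^n (∂_s f · v_s g + v_s f · ∂_s g)`
is expanded by the ordinary higher Leibniz rule followed by one application of the Leibniz rule for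
`∂_c`. This involves `(∂_s ∂_c)^h v_s g` and `∂_c (∂_s ∂_c)^h v_s g`; for regular `g` the
Cauchy–Riemann equation gives `∂_c v_s g = (1/2) ∂_c g`, which produces the factor `1/2` in every
term except the two with `v_s`.
-/

open scoped ContDiff
open Finset.HasAntidiagonal (antidiagonal mem_antidiagonal)

section DerivAlong

variable {𝕜 E F A : Type*} [NontriviallyNormedField 𝕜] [NormedAddCommGroup E] [NormedSpace 𝕜 E]
  [NormedAddCommGroup F] [NormedSpace 𝕜 F] [NormedRing A] [NormedAlgebra 𝕜 A]
  {U : Set E} {X : E → E}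

variable (𝕜) in
/-- The derivative of a function along a vector field `X`. -/
def derivAlong (X : E → E) (φ : E → F) : E → F := fun x => fderiv 𝕜 φ x (X x)

theorem contDiffOn_iterate_derivAlong (hU : IsOpen U) (hX : ContDiffOn 𝕜 ∞ X U) {φ : E → F}
    (hφ : ContDiffOn 𝕜 ∞ φ U) (n : ℕ) : ContDiffOn 𝕜 ∞ ((derivAlong 𝕜 X)^[n] φ) U := by
  induction n with
  | zero => exact hφ
  | succ n ih =>
    rw [Function.iterate_succ_apply']
    exact (ih.fderiv_of_isOpen hU (by simp)).clm_apply hX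

theorem differentiableAt_iterate_derivAlong (hU : IsOpen U) (hX : ContDiffOn 𝕜 ∞ X U)
    {φ : E → F} (hφ : ContDiffOn 𝕜 ∞ φ U) (n : ℕ) {x : E} (hx : x ∈ U) :
    DifferentiableAt 𝕜 ((derivAlong 𝕜 X)^[n] φ) x :=
  ((contDiffOn_iterate_derivAlong hU hX hφ n).contDiffAt (hU.mem_nhds hx)).differentiableAt
    (by simp)

theorem iterate_derivAlong_add (hU : IsOpen U) (hX : ContDiffOn 𝕜 ∞ X U) {φ ψ : E → F}
    (hφ : ContDiffOn 𝕜 ∞ φ U) (hψ : ContDiffOn 𝕜 ∞ ψ U) (n : ℕ) :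
    Set.EqOn ((derivAlong 𝕜 X)^[n] (φ + ψ))
      ((derivAlong 𝕜 X)^[n] φ + (derivAlong 𝕜 X)^[n] ψ) U := by
  induction n with
  | zero => exact fun _ _ => rfl
  | succ n ih =>
    intro x hx
    simp only [Function.iterate_succ_apply', derivAlong, Pi.add_apply]
    rw [(ih.eventuallyEq_of_mem (hU.mem_nhds hx)).fderiv_eq,
      fderiv_add (differentiableAt_iterate_derivAlong hU hX hφ n hx)
        (differentiableAt_iterate_derivAlong hU hX hψ n hx)]
    rfl

theorem iterate_derivAlong_mul (hU : IsOpen U) (hX : ContDiffOn 𝕜 ∞ X U) {φ ψ : E → A}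
    (hφ : ContDiffOn 𝕜 ∞ φ U) (hψ : ContDiffOn 𝕜 ∞ ψ U) (n : ℕ) :
    Set.EqOn ((derivAlong 𝕜 X)^[n] (φ * ψ))
      (fun x => ∑ ij ∈ antidiagonal n,
        n.choose ij.1 • ((derivAlong 𝕜 X)^[ij.1] φ x * (derivAlong 𝕜 X)^[ij.2] ψ x)) U := by
  induction n with
  | zero => intro x _; simp
  | succ n ih =>
    intro x hx
    have hsum := HasFDerivAt.fun_sum (u := antidiagonal n) fun ij _ =>
      ((differentiableAt_iterate_derivAlong hU hX hφ ij.1 hx).hasFDerivAt.mul'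
        (differentiableAt_iterate_derivAlong hU hX hψ ij.2 hx).hasFDerivAt).const_smul
          (n.choose ij.1)
    rw [Function.iterate_succ_apply', derivAlong,
      (hsum.congr_of_eventuallyEq (ih.eventuallyEq_of_mem (hU.mem_nhds hx))).fderiv]
    beta_reduce
    rw [Finset.sum_antidiagonal_choose_succ_nsmul
      fun i j => (derivAlong 𝕜 X)^[i] φ x * (derivAlong 𝕜 X)^[j] ψ x]
    simp only [sum_apply, smul_apply, add_apply, smul_add, Finset.sum_add_distrib,
      Function.iterate_succ_apply']
    congr 1
    refine Finset.sum_congr rfl fun ⟨i, j⟩ hij => ?_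
    rw [n.choose_symm_of_eq_add (mem_antidiagonal.1 hij).symm]
    simp [derivAlong]

end DerivAlong

section Conjugation

instance : CharZero ℍq := charZero_of_injective_algebraMap (algebraMap ℝ ℍq).injective

instance : StarModule ℝ ℍq := ⟨fun r q => by simp⟩

/-- Invariance under quaternionic conjugation. The functions `v_s f` and `∂_s f` have it; on
invariant functions `v_s` is the identity and `∂_s` vanishes. -/
def IsConjInvariant (φ : ℍq → ℍq) : Prop := ∀ x, φ (star x) = φ x

theorem isConjInvariant_svalue (f : ℍq → ℍq) : IsConjInvariant (svalue f) := fun x => by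
  simp [svalue, add_comm]

theorem isConjInvariant_sderiv' (f : ℍq → ℍq) : IsConjInvariant (sderiv' f) := fun x => by
  simp only [sderiv', im_star, star_star, mul_neg, inv_neg]
  noncomm_ring

namespace IsConjInvariant

variable {φ ψ : ℍq → ℍq}

theorem add (hφ : IsConjInvariant φ) (hψ : IsConjInvariant ψ) : IsConjInvariant (φ + ψ) :=
  fun x => by simp [hφ x, hψ x]

theorem mul (hφ : IsConjInvariant φ) (hψ : IsConjInvariant ψ) : IsConjInvariant (φ * ψ) :=
  fun x => by simp [hφ x, hψ x]

theorem svalue_eq (hφ : IsConjInvariant φ) : svalue φ = φ := funext fun x => by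
  rw [svalue, hφ x, add_self_div_two]

theorem sderiv'_eq_zero (hφ : IsConjInvariant φ) : sderiv' φ = 0 := funext fun x => by
  simp [sderiv', hφ x]

theorem fderiv_star (hφ : IsConjInvariant φ) (x v : ℍq) :
    fderiv ℝ φ (star x) (star v) = fderiv ℝ φ x v := by
  have h := (starL' ℝ : ℍq ≃L[ℝ] ℍq).comp_right_fderiv (f := φ) (x := x)
  have hcomp : φ ∘ (starL' ℝ : ℍq ≃L[ℝ] ℍq) = φ := funext hφ
  rw [hcomp] at h
  simp [h]

end IsConjInvariant

theorem svalue_eq_smul (f : ℍq → ℍq) (x : ℍq) :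
    svalue f x = (1 / 2 : ℝ) • (f x + f (star x)) := by
  rw [svalue, eq_comm, eq_div_iff two_ne_zero, mul_two, ← add_smul]
  norm_num

theorem sderiv'_of_im_eq_zero (f : ℍq → ℍq) {x : ℍq} (hx : x.im = 0) : sderiv' f x = 0 := by
  simp [sderiv', hx]

theorem svalue_add_im_mul_sderiv' (f : ℍq → ℍq) (x : ℍq) :
    svalue f x + x.im * sderiv' f x = f x := by
  by_cases hx : x.im = 0
  · have hstar : star x = x := by
      rw [Quaternion.star_eq_self, ← Quaternion.re_add_im x, hx]; simp
    simp [svalue, hx, hstar]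
  · have him : x.im * sderiv' f x = (f x - f (star x)) / 2 := by
      rw [sderiv', mul_inv_rev, mul_assoc, mul_inv_cancel_left₀ hx, div_eq_mul_inv]
      exact (Nat.cast_commute 2 _).inv_left₀
    rw [svalue, him, ← add_div, add_add_sub_cancel, add_self_div_two]

section Decomposition

variable {f a b : ℍq → ℍq}

theorem svalue_eq_of_eq_add_im_mul (ha : IsConjInvariant a) (hb : IsConjInvariant b)
    (h : ∀ x, f x = a x + x.im * b x) : svalue f = a := funext fun x => by
  rw [svalue, h x, h (star x), ha x, hb x, im_star, neg_mul, add_add_add_comm, add_neg_cancel,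
    add_zero, add_self_div_two]

theorem sderiv'_eq_of_eq_add_im_mul (ha : IsConjInvariant a) (hb : IsConjInvariant b)
    (h : ∀ x, f x = a x + x.im * b x) (hb₀ : ∀ x, x.im = 0 → b x = 0) :
    sderiv' f = b := funext fun x => by
  by_cases hx : x.im = 0
  · rw [sderiv'_of_im_eq_zero f hx, hb₀ x hx]
  · rw [sderiv', h x, h (star x), ha x, hb x, im_star, neg_mul, add_sub_add_left_eq_sub,
      sub_neg_eq_add, ← two_mul, ← mul_assoc 2, inv_mul_cancel_left₀]
    simpa using hx

end Decomposition

end Conjugation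

section SphericalField

/-- The vector field `(2 Im x)⁻¹`, that is `-I/(2β)` at `x = α + Iβ`. Differentiation along it is
`-(1/2β)∂/∂β`, which is what `∂_s ∂_c` does to conjugation-invariant functions; the field is `0` on
the real axis. -/
def sphericalField (x : ℍq) : ℍq := (2 * x.im)⁻¹

theorem sphericalField_eq_smul_im (x : ℍq) :
    sphericalField x = -(2 * ‖x.im‖ ^ 2)⁻¹ • x.im := by
  have htwo : (2 * x.im : ℍq) = (2 : ℝ) • x.im := by rw [two_mul, two_smul]
  rw [sphericalField, htwo, Quaternion.inv_def, Quaternion.normSq_smul, Quaternion.star_smul,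
    star_im, Quaternion.normSq_eq_norm_mul_self, smul_smul, smul_neg, neg_smul]
  congr 2
  ring

theorem star_sphericalField (x : ℍq) : star (sphericalField x) = -sphericalField x := by
  simp [sphericalField_eq_smul_im]

theorem sphericalField_star (x : ℍq) : sphericalField (star x) = -sphericalField x := by
  simp [sphericalField, inv_neg]

theorem im_mul_sphericalField_mul {x : ℍq} (hx : x.im ≠ 0) (q : ℍq) :
    x.im * (sphericalField x * q) = (1 / 2 : ℝ) • q := by
  have hnorm : ‖x.im‖ ≠ 0 := norm_ne_zero_iff.2 hx
  rw [sphericalField_eq_smul_im, smul_mul_assoc, mul_smul_comm, ← mul_assoc, ← pow_two,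
    Quaternion.im_sq, Quaternion.normSq_eq_norm_mul_self, neg_mul, Quaternion.coe_mul_eq_smul,
    smul_neg, smul_smul, neg_mul, neg_smul, neg_neg]
  congr 1
  field_simp

theorem contDiff_im : ContDiff ℝ ∞ (fun x : ℍq => x.im) :=
  (LinearMap.toContinuousLinearMap
    { toFun := fun x : ℍq => x.im
      map_add' := Quaternion.im_add
      map_smul' := fun r x => Quaternion.im_smul x r }).contDiff

theorem contDiffOn_sphericalField {U : Set ℍq} (hU : ∀ x ∈ U, x.im ≠ 0) :
    ContDiffOn ℝ ∞ sphericalField U := by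
  rw [funext sphericalField_eq_smul_im]
  exact ((contDiffOn_const.mul ((contDiff_im.contDiffOn.norm ℝ hU).pow 2)).inv
    fun x hx => by simpa using hU x hx).neg.smul contDiff_im.contDiffOn

theorem qJ_mul_map_qJ (L : ℍq →L[ℝ] ℍq) (x : ℍq) :
    qJ x * L (qJ x) = -(2 : ℝ) • (x.im * L (sphericalField x)) := by
  simp only [qJ, sphericalField_eq_smul_im, map_smul, mul_smul_comm, smul_mul_assoc, smul_smul]
  congr 1
  ring

theorem cderiv_eq (f : ℍq → ℍq) (x : ℍq) :
    cderiv f x = (1 / 2 : ℝ) • fderiv ℝ f x 1 + x.im * fderiv ℝ f x (sphericalField x) := by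
  rw [cderiv, qJ_mul_map_qJ]
  module

theorem cderivBar_eq (f : ℍq → ℍq) (x : ℍq) :
    cderivBar f x = (1 / 2 : ℝ) • fderiv ℝ f x 1 - x.im * fderiv ℝ f x (sphericalField x) := by
  rw [cderivBar, qJ_mul_map_qJ]
  module

end SphericalField

section SliceCalculus

variable {U : Set ℍq} {f g φ ψ : ℍq → ℍq} {x : ℍq}

theorem sphericalField_of_im_eq_zero (hx : x.im = 0) : sphericalField x = 0 := by
  simp [sphericalField, hx]

namespace IsConjInvariant

theorem fderiv_one (hφ : IsConjInvariant φ) : IsConjInvariant fun x => fderiv ℝ φ x 1 :=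
  fun x => by simpa using hφ.fderiv_star x 1

theorem derivAlong_sphericalField (hφ : IsConjInvariant φ) :
    IsConjInvariant (derivAlong ℝ sphericalField φ) := fun x => by
  rw [derivAlong, sphericalField_star, ← star_sphericalField, hφ.fderiv_star, derivAlong]

theorem svalue_cderiv (hφ : IsConjInvariant φ) :
    svalue (cderiv φ) = fun x => (1 / 2 : ℝ) • fderiv ℝ φ x 1 :=
  svalue_eq_of_eq_add_im_mul (fun x => congrArg ((1 / 2 : ℝ) • ·) (hφ.fderiv_one x))
    hφ.derivAlong_sphericalField (cderiv_eq φ)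

theorem opSC_eq_derivAlong (hφ : IsConjInvariant φ) :
    opSC φ = derivAlong ℝ sphericalField φ :=
  sderiv'_eq_of_eq_add_im_mul (fun x => congrArg ((1 / 2 : ℝ) • ·) (hφ.fderiv_one x))
    hφ.derivAlong_sphericalField (cderiv_eq φ) fun x hx => by
      rw [derivAlong, sphericalField_of_im_eq_zero hx, map_zero]

theorem opSC_iterate (hφ : IsConjInvariant φ) (n : ℕ) : IsConjInvariant (opSC^[n] φ) := by
  cases n with
  | zero => exact hφ
  | succ n =>
    rw [Function.iterate_succ_apply']
    exact isConjInvariant_sderiv' _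

theorem opSC_iterate_eq_derivAlong (hφ : IsConjInvariant φ) (n : ℕ) :
    opSC^[n] φ = (derivAlong ℝ sphericalField)^[n] φ := by
  induction n with
  | zero => rfl
  | succ n ih =>
    rw [Function.iterate_succ_apply', (hφ.opSC_iterate n).opSC_eq_derivAlong, ih,
      Function.iterate_succ_apply']

theorem sprod_right (hφ : IsConjInvariant φ) (f : ℍq → ℍq) : sprod f φ = f * φ := funext fun x => by
  rw [sprod, hφ.svalue_eq, hφ.sderiv'_eq_zero, Pi.mul_apply,
    ← svalue_add_im_mul_sderiv' f x]
  simp only [Pi.zero_apply, mul_zero, zero_add, add_zero, add_mul, mul_assoc]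

theorem sprod_left (hφ : IsConjInvariant φ) (f : ℍq → ℍq) (x : ℍq) :
    sprod φ f x = φ x * svalue f x + x.im * (φ x * sderiv' f x) := by
  rw [sprod, hφ.svalue_eq, hφ.sderiv'_eq_zero]
  simp only [Pi.zero_apply, zero_mul, mul_zero, add_zero]

theorem cderiv_mul (hφ : IsConjInvariant φ) (hψ : IsConjInvariant ψ)
    (hφx : DifferentiableAt ℝ φ x) (hψx : DifferentiableAt ℝ ψ x) :
    cderiv (φ * ψ) x = sprod (cderiv φ) ψ x + sprod φ (cderiv ψ) x := by
  have hsderiv : sderiv' (cderiv ψ) = derivAlong ℝ sphericalField ψ := hψ.opSC_eq_derivAlong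
  rw [hψ.sprod_right, hφ.sprod_left, hψ.svalue_cderiv, hsderiv, Pi.mul_apply, cderiv_eq,
    cderiv_eq, (hφx.hasFDerivAt.mul' hψx.hasFDerivAt).fderiv]
  simp only [derivAlong, add_apply, smul_apply, smul_eq_mul, MulOpposite.smul_eq_mul_unop,
    MulOpposite.unop_op, smul_add, mul_add, add_mul, smul_mul_assoc, mul_smul_comm, mul_assoc]
  abel

end IsConjInvariant

theorem sderiv'_sprod (f g : ℍq → ℍq) :
    sderiv' (sprod f g) = sderiv' f * svalue g + svalue f * sderiv' g := by
  have him : IsConjInvariant fun x => x.im * x.im := fun x => by simp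
  rw [add_comm]
  refine sderiv'_eq_of_eq_add_im_mul
    (((isConjInvariant_svalue f).mul (isConjInvariant_svalue g)).add
      (him.mul ((isConjInvariant_sderiv' f).mul (isConjInvariant_sderiv' g))))
    (((isConjInvariant_svalue f).mul (isConjInvariant_sderiv' g)).add
      ((isConjInvariant_sderiv' f).mul (isConjInvariant_svalue g)))
    (fun x => rfl) fun x hx => ?_
  simp [sderiv'_of_im_eq_zero _ hx]

theorem opSC_iterate_sderiv' (f : ℍq → ℍq) (n : ℕ) :
    opSC^[n] (sderiv' f) = sderiv' (opCS^[n] f) :=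
  ((show Function.Semiconj sderiv' opCS opSC from fun _ => rfl).iterate_right n f).symm

theorem opCS_iterate_succ (f : ℍq → ℍq) (n : ℕ) :
    opCS^[n + 1] f = cderiv (opSC^[n] (sderiv' f)) := by
  rw [Function.iterate_succ_apply', opSC_iterate_sderiv', opCS]

theorem cderiv_eqOn (hU : IsOpen U) (h : Set.EqOn f g U) : Set.EqOn (cderiv f) (cderiv g) U :=
  fun x hx => by rw [cderiv, cderiv, (h.eventuallyEq_of_mem (hU.mem_nhds hx)).fderiv_eq]

theorem cderiv_add (hf : DifferentiableAt ℝ f x) (hg : DifferentiableAt ℝ g x) :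
    cderiv (f + g) x = cderiv f x + cderiv g x := by
  simp only [cderiv_eq, fderiv_add hf hg, add_apply, mul_add, smul_add]
  abel

theorem cderiv_const_smul (c : ℝ) (f : ℍq → ℍq) : cderiv (c • f) = c • cderiv f :=
  funext fun x => by
    simp only [cderiv_eq, fderiv_const_smul_field, Pi.smul_apply, smul_apply, mul_smul_comm,
      smul_add, smul_comm c]

theorem cderiv_sum_nsmul {ι : Type*} {s : Finset ι} {c : ι → ℕ} {F : ι → ℍq → ℍq}
    (hF : ∀ i ∈ s, DifferentiableAt ℝ (F i) x) :
    cderiv (fun y => ∑ i ∈ s, c i • F i y) x = ∑ i ∈ s, c i • cderiv (F i) x := by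
  have hsum : fderiv ℝ (fun y => ∑ i ∈ s, c i • F i y) x = ∑ i ∈ s, c i • fderiv ℝ (F i) x :=
    (HasFDerivAt.fun_sum fun i hi => (hF i hi).hasFDerivAt.const_smul (c i)).fderiv
  simp only [cderiv_eq, hsum, sum_apply, smul_apply, Finset.smul_sum, Finset.mul_sum,
    smul_add, Finset.sum_add_distrib, mul_smul_comm]
  congr 1
  exact Finset.sum_congr rfl fun i _ => smul_comm (1 / 2 : ℝ) (c i) (fderiv ℝ (F i) x 1)

end SliceCalculus

section HigherLeibniz

variable {U : Set ℍq} {f g φ ψ : ℍq → ℍq} {x : ℍq}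

theorem contDiffOn_svalue (hstar : ∀ x ∈ U, star x ∈ U) (hf : ContDiffOn ℝ ∞ f U) :
    ContDiffOn ℝ ∞ (svalue f) U := by
  rw [funext (svalue_eq_smul f)]
  exact (hf.add (hf.comp (starL' ℝ : ℍq ≃L[ℝ] ℍq).contDiff.contDiffOn hstar)).const_smul _

theorem contDiffOn_sderiv' (hstar : ∀ x ∈ U, star x ∈ U) (him : ∀ x ∈ U, x.im ≠ 0)
    (hf : ContDiffOn ℝ ∞ f U) : ContDiffOn ℝ ∞ (sderiv' f) U :=
  (contDiffOn_sphericalField him).mul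
    (hf.sub (hf.comp (starL' ℝ : ℍq ≃L[ℝ] ℍq).contDiff.contDiffOn hstar))

namespace IsConjInvariant

theorem differentiableAt_opSC_iterate (hφ : IsConjInvariant φ) (hU : IsOpen U)
    (him : ∀ x ∈ U, x.im ≠ 0) (hφU : ContDiffOn ℝ ∞ φ U) (n : ℕ) (hx : x ∈ U) :
    DifferentiableAt ℝ (opSC^[n] φ) x := by
  rw [hφ.opSC_iterate_eq_derivAlong]
  exact differentiableAt_iterate_derivAlong hU (contDiffOn_sphericalField him) hφU n hx

theorem cderiv_opSC_iterate_add (hφ : IsConjInvariant φ) (hψ : IsConjInvariant ψ) (hU : IsOpen U)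
    (him : ∀ x ∈ U, x.im ≠ 0) (hφU : ContDiffOn ℝ ∞ φ U) (hψU : ContDiffOn ℝ ∞ ψ U) (n : ℕ)
    (hx : x ∈ U) :
    cderiv (opSC^[n] (φ + ψ)) x = cderiv (opSC^[n] φ) x + cderiv (opSC^[n] ψ) x := by
  have hadd : Set.EqOn (opSC^[n] (φ + ψ)) (opSC^[n] φ + opSC^[n] ψ) U := by
    simp only [(hφ.add hψ).opSC_iterate_eq_derivAlong, hφ.opSC_iterate_eq_derivAlong,
      hψ.opSC_iterate_eq_derivAlong]
    exact iterate_derivAlong_add hU (contDiffOn_sphericalField him) hφU hψU n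
  rw [cderiv_eqOn hU hadd hx, cderiv_add (hφ.differentiableAt_opSC_iterate hU him hφU n hx)
    (hψ.differentiableAt_opSC_iterate hU him hψU n hx)]

theorem cderiv_opSC_iterate_mul (hφ : IsConjInvariant φ) (hψ : IsConjInvariant ψ) (hU : IsOpen U)
    (him : ∀ x ∈ U, x.im ≠ 0) (hφU : ContDiffOn ℝ ∞ φ U) (hψU : ContDiffOn ℝ ∞ ψ U) (n : ℕ)
    (hx : x ∈ U) :
    cderiv (opSC^[n] (φ * ψ)) x = ∑ ij ∈ antidiagonal n, n.choose ij.1 •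
      (sprod (cderiv (opSC^[ij.1] φ)) (opSC^[ij.2] ψ) x
        + sprod (opSC^[ij.1] φ) (cderiv (opSC^[ij.2] ψ)) x) := by
  have hmul : Set.EqOn (opSC^[n] (φ * ψ)) (fun y => ∑ ij ∈ antidiagonal n,
      n.choose ij.1 • (opSC^[ij.1] φ * opSC^[ij.2] ψ) y) U := by
    simp only [(hφ.mul hψ).opSC_iterate_eq_derivAlong, hφ.opSC_iterate_eq_derivAlong,
      hψ.opSC_iterate_eq_derivAlong]
    exact iterate_derivAlong_mul hU (contDiffOn_sphericalField him) hφU hψU n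
  have hφx (i : ℕ) := hφ.differentiableAt_opSC_iterate hU him hφU i hx
  have hψx (j : ℕ) := hψ.differentiableAt_opSC_iterate hU him hψU j hx
  rw [cderiv_eqOn hU hmul hx, cderiv_sum_nsmul fun ij _ => (hφx ij.1).mul (hψx ij.2)]
  exact Finset.sum_congr rfl fun ij _ => by
    rw [(hφ.opSC_iterate ij.1).cderiv_mul (hψ.opSC_iterate ij.2) (hφx ij.1) (hψx ij.2)]

end IsConjInvariant

theorem opCS_iterate_succ_sprod_eq_sum_antidiagonal (hU : IsOpen U) (hstar : ∀ x ∈ U, star x ∈ U)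
    (him : ∀ x ∈ U, x.im ≠ 0) (hf : ContDiffOn ℝ ∞ f U) (hg : ContDiffOn ℝ ∞ g U) (n : ℕ)
    (hx : x ∈ U) :
    opCS^[n + 1] (sprod f g) x = ∑ ij ∈ antidiagonal n, n.choose ij.1 •
      ((sprod (sderiv' (opCS^[ij.2] f)) (cderiv (opSC^[ij.1] (svalue g))) x
          + sprod (cderiv (opSC^[ij.1] (svalue f))) (sderiv' (opCS^[ij.2] g)) x)
        + (sprod (opCS^[ij.2 + 1] f) (opSC^[ij.1] (svalue g)) x
          + sprod (opSC^[ij.1] (svalue f)) (opCS^[ij.2 + 1] g) x)) := by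
  have hvf := contDiffOn_svalue hstar hf
  have hvg := contDiffOn_svalue hstar hg
  have hdf := contDiffOn_sderiv' hstar him hf
  have hdg := contDiffOn_sderiv' hstar him hg
  have hcvf := isConjInvariant_svalue f
  have hcvg := isConjInvariant_svalue g
  have hcdf := isConjInvariant_sderiv' f
  have hcdg := isConjInvariant_sderiv' g
  rw [opCS_iterate_succ, sderiv'_sprod, (hcdf.mul hcvg).cderiv_opSC_iterate_add (hcvf.mul hcdg)
      hU him (hdf.mul hvg) (hvf.mul hdg) n hx,
    hcdf.cderiv_opSC_iterate_mul hcvg hU him hdf hvg n hx,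
    hcvf.cderiv_opSC_iterate_mul hcdg hU him hvf hdg n hx,
    ← Finset.Nat.sum_antidiagonal_swap, ← Finset.sum_add_distrib]
  refine Finset.sum_congr rfl fun ⟨i, j⟩ hij => ?_
  rw [Prod.swap_prod_mk, n.choose_symm_of_eq_add (mem_antidiagonal.1 hij).symm]
  simp only [opCS_iterate_succ, opSC_iterate_sderiv', smul_add]
  abel

theorem opCS_iterate_succ_sprod_of_contDiffOn (hU : IsOpen U) (hstar : ∀ x ∈ U, star x ∈ U)
    (him : ∀ x ∈ U, x.im ≠ 0) (hf : ContDiffOn ℝ ∞ f U) (hg : ContDiffOn ℝ ∞ g U) (n : ℕ)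
    (hx : x ∈ U) :
    opCS^[n + 1] (sprod f g) x =
      sprod (opCS^[n + 1] f) (svalue g) x + sprod (svalue f) (opCS^[n + 1] g) x
      + ((∑ h ∈ Finset.range (n + 1), n.choose h •
          (sprod (sderiv' (opCS^[n - h] f)) (cderiv (opSC^[h] (svalue g))) x
            + sprod (cderiv (opSC^[h] (svalue f))) (sderiv' (opCS^[n - h] g)) x))
        + ∑ h ∈ Finset.Ico 1 (n + 1), n.choose h •
          (sprod (opCS^[n - h + 1] f) (opSC^[h] (svalue g)) x
            + sprod (opSC^[h] (svalue f)) (opCS^[n - h + 1] g) x)) := by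
  rw [opCS_iterate_succ_sprod_eq_sum_antidiagonal hU hstar him hf hg n hx,
    Finset.Nat.sum_antidiagonal_eq_sum_range_succ_mk]
  simp only [smul_add _ (_ + _ : ℍq) (_ + _), Finset.sum_add_distrib (f := fun _ => _ • (_ + _))]
  conv_lhs => arg 2; rw [Finset.range_eq_Ico, Finset.sum_eq_sum_Ico_succ_bot n.succ_pos]
  rw [Nat.choose_zero_right, one_smul, add_left_comm]
  rfl

end HigherLeibniz

section CauchyRiemann

variable {U : Set ℍq} {f g F G F' G' : ℍq → ℍq} {x : ℍq}

theorem fderiv_sphericalField_of_cderivBar_eq_zero (hx : x.im ≠ 0) (hf : cderivBar f x = 0) :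
    fderiv ℝ f x (sphericalField x) = sphericalField x * fderiv ℝ f x 1 := by
  rw [cderivBar_eq, sub_eq_zero, ← im_mul_sphericalField_mul hx] at hf
  exact (mul_left_cancel₀ hx hf).symm

theorem cderiv_of_cderivBar_eq_zero (hx : x.im ≠ 0) (hf : cderivBar f x = 0) :
    cderiv f x = fderiv ℝ f x 1 := by
  rw [cderiv_eq, fderiv_sphericalField_of_cderivBar_eq_zero hx hf, im_mul_sphericalField_mul hx,
    ← add_smul]
  norm_num

theorem fderiv_svalue (hfx : DifferentiableAt ℝ f x) (hfx' : DifferentiableAt ℝ f (star x))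
    (v : ℍq) :
    fderiv ℝ (svalue f) x v = (1 / 2 : ℝ) • (fderiv ℝ f x v + fderiv ℝ f (star x) (star v)) := by
  have hstar : HasFDerivAt star ((starL' ℝ : ℍq ≃L[ℝ] ℍq) : ℍq →L[ℝ] ℍq) x :=
    (starL' ℝ : ℍq ≃L[ℝ] ℍq).hasFDerivAt
  have hsvalue : svalue f = (1 / 2 : ℝ) • (f + f ∘ star) := funext (svalue_eq_smul f)
  rw [hsvalue,
    ((hfx.hasFDerivAt.add (hfx'.hasFDerivAt.comp x hstar)).const_smul (1 / 2 : ℝ)).fderiv]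
  simp

theorem cderiv_svalue (hx : x.im ≠ 0) (hfx : DifferentiableAt ℝ f x)
    (hfx' : DifferentiableAt ℝ f (star x)) (hf : cderivBar f x = 0)
    (hf' : cderivBar f (star x) = 0) :
    cderiv (svalue f) x = (1 / 2 : ℝ) • cderiv f x := by
  have hx' : (star x).im ≠ 0 := by simpa using hx
  have hX : star (sphericalField x) = sphericalField (star x) := by
    rw [star_sphericalField, sphericalField_star]
  rw [cderiv_eq, cderiv_of_cderivBar_eq_zero hx hf, fderiv_svalue hfx hfx', fderiv_svalue hfx hfx',
    hX, star_one, fderiv_sphericalField_of_cderivBar_eq_zero hx hf,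
    fderiv_sphericalField_of_cderivBar_eq_zero hx' hf', sphericalField_star, neg_mul,
    ← sub_eq_add_neg, ← mul_sub, mul_smul_comm, im_mul_sphericalField_mul hx]
  module

theorem svalue_eqOn (hstar : ∀ x ∈ U, star x ∈ U) (h : Set.EqOn f g U) :
    Set.EqOn (svalue f) (svalue g) U :=
  fun x hx => by rw [svalue, svalue, h hx, h (hstar x hx)]

theorem sderiv'_eqOn (hstar : ∀ x ∈ U, star x ∈ U) (h : Set.EqOn f g U) :
    Set.EqOn (sderiv' f) (sderiv' g) U :=
  fun x hx => by rw [sderiv', sderiv', h hx, h (hstar x hx)]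

theorem sprod_eqOn (hstar : ∀ x ∈ U, star x ∈ U) (hF : Set.EqOn F F' U) (hG : Set.EqOn G G' U) :
    Set.EqOn (sprod F G) (sprod F' G') U := fun x hx => by
  simp only [sprod, svalue_eqOn hstar hF hx, svalue_eqOn hstar hG hx, sderiv'_eqOn hstar hF hx,
    sderiv'_eqOn hstar hG hx]

theorem svalue_const_smul (c : ℝ) (f : ℍq → ℍq) : svalue (c • f) = c • svalue f :=
  funext fun x => by
    simp only [svalue_eq_smul, Pi.smul_apply, ← smul_add, smul_comm c]

theorem sderiv'_const_smul (c : ℝ) (f : ℍq → ℍq) : sderiv' (c • f) = c • sderiv' f :=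
  funext fun x => by simp only [sderiv', Pi.smul_apply, ← smul_sub, mul_smul_comm]

theorem sprod_const_smul_left (c : ℝ) (F G : ℍq → ℍq) : sprod (c • F) G = c • sprod F G :=
  funext fun x => by
    simp only [sprod, svalue_const_smul, sderiv'_const_smul, Pi.smul_apply, smul_mul_assoc,
      mul_smul_comm, mul_add, smul_add]

theorem sprod_const_smul_right (c : ℝ) (F G : ℍq → ℍq) : sprod F (c • G) = c • sprod F G :=
  funext fun x => by
    simp only [sprod, svalue_const_smul, sderiv'_const_smul, Pi.smul_apply, mul_smul_comm,
      mul_add, smul_add]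

theorem sprod_of_eqOn_const_smul_left (hstar : ∀ x ∈ U, star x ∈ U) {c : ℝ}
    (hF : Set.EqOn F (c • F') U) (G : ℍq → ℍq) (hx : x ∈ U) :
    sprod F G x = c • sprod F' G x := by
  rw [sprod_eqOn hstar hF (Set.eqOn_refl G U) hx, sprod_const_smul_left, Pi.smul_apply]

theorem sprod_of_eqOn_const_smul_right (hstar : ∀ x ∈ U, star x ∈ U) {c : ℝ} (F : ℍq → ℍq)
    (hG : Set.EqOn G (c • G') U) (hx : x ∈ U) :
    sprod F G x = c • sprod F G' x := by
  rw [sprod_eqOn hstar (Set.eqOn_refl F U) hG hx, sprod_const_smul_right, Pi.smul_apply]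

theorem opSC_eqOn_const_smul (hstar : ∀ x ∈ U, star x ∈ U) {c : ℝ}
    (h : Set.EqOn (cderiv f) (c • cderiv g) U) : Set.EqOn (opSC f) (c • opSC g) U := by
  simpa only [opSC, sderiv'_const_smul] using sderiv'_eqOn hstar h

theorem cderiv_opSC_iterate_svalue_eqOn (hU : IsOpen U) (hstar : ∀ x ∈ U, star x ∈ U)
    (him : ∀ x ∈ U, x.im ≠ 0) (hf : DifferentiableOn ℝ f U) (hCR : ∀ x ∈ U, cderivBar f x = 0)
    (n : ℕ) :
    Set.EqOn (cderiv (opSC^[n] (svalue f))) ((1 / 2 : ℝ) • cderiv (opSC^[n] f)) U := by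
  induction n with
  | zero =>
    exact fun x hx => cderiv_svalue (him x hx) (hf.differentiableAt (hU.mem_nhds hx))
      (hf.differentiableAt (hU.mem_nhds (hstar x hx))) (hCR x hx) (hCR _ (hstar x hx))
  | succ n ih =>
    simp only [Function.iterate_succ_apply']
    rw [← cderiv_const_smul]
    exact cderiv_eqOn hU (opSC_eqOn_const_smul hstar ih)

theorem opSC_iterate_svalue_eqOn (hU : IsOpen U) (hstar : ∀ x ∈ U, star x ∈ U)
    (him : ∀ x ∈ U, x.im ≠ 0) (hf : DifferentiableOn ℝ f U) (hCR : ∀ x ∈ U, cderivBar f x = 0)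
    {n : ℕ} (hn : n ≠ 0) :
    Set.EqOn (opSC^[n] (svalue f)) ((1 / 2 : ℝ) • opSC^[n] f) U := by
  obtain ⟨n, rfl⟩ := Nat.exists_eq_succ_of_ne_zero hn
  simp only [Function.iterate_succ_apply']
  exact opSC_eqOn_const_smul hstar (cderiv_opSC_iterate_svalue_eqOn hU hstar him hf hCR n)

end CauchyRiemann

section Smoothness

open Complex (I)
open scoped ComplexConjugate

theorem contDiffOn_of_cauchyRiemann {E : Type*} [NormedAddCommGroup E] [NormedSpace ℝ E]
    [NormedSpace ℂ E] [IsScalarTower ℝ ℂ E] [CompleteSpace E] {V : Set ℂ} {F : ℂ → E}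
    (hV : IsOpen V) (hF : DifferentiableOn ℝ F V)
    (hCR : ∀ z ∈ V, fderiv ℝ F z I = I • fderiv ℝ F z 1) : ContDiffOn ℝ ∞ F V := by
  have hol : DifferentiableOn ℂ F V := fun z hz => by
    have hlin : (ContinuousLinearMap.toSpanSingleton ℂ (fderiv ℝ F z 1)).restrictScalars ℝ =
        fderiv ℝ F z := ContinuousLinearMap.ext fun w => by
      have hw : w = w.re • 1 + w.im • I := by simp [Complex.re_add_im]
      rw [hw, ContinuousLinearMap.coe_restrictScalars', ContinuousLinearMap.toSpanSingleton_apply,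
        map_add, map_smul, map_smul, hCR z hz, add_smul, smul_assoc, smul_assoc, one_smul]
    exact (hasFDerivAt_of_restrictScalars ℝ (hF.differentiableAt (hV.mem_nhds hz)).hasFDerivAt
      hlin).differentiableAt.differentiableWithinAt
  exact (hol.contDiffOn hV).restrict_scalars ℝ

/-- The embedding of `ℂ` into `ℍ` as the slice spanned by `1` and `i`. -/
def sliceEmb : ℂ →L[ℝ] ℍq := LinearMap.toContinuousLinearMap Quaternion.ofComplex.toLinearMap

theorem sliceEmb_apply (z : ℂ) : sliceEmb z = z := rfl

theorem star_sliceEmb (z : ℂ) : star (sliceEmb z) = sliceEmb (conj z) := by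
  ext <;> simp [sliceEmb_apply]

theorem im_sliceEmb (z : ℂ) : (sliceEmb z).im = z.im • sliceEmb I := by
  ext <;> simp [sliceEmb_apply]

theorem norm_sliceEmb (z : ℂ) : ‖sliceEmb z‖ = ‖z‖ := by
  rw [← mul_self_inj (norm_nonneg _) (norm_nonneg _), ← Quaternion.normSq_eq_norm_mul_self,
    Complex.norm_mul_self_eq_normSq, Quaternion.normSq_def', Complex.normSq_apply]
  simp [sliceEmb_apply, pow_two]

theorem exists_sphericalField_sliceEmb_eq_smul {z : ℂ} (hz : (sliceEmb z).im ≠ 0) :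
    ∃ r : ℝ, r ≠ 0 ∧ sphericalField (sliceEmb z) = r • sliceEmb I := by
  have hX : sphericalField (sliceEmb z) =
      (-(2 * ‖(sliceEmb z).im‖ ^ 2)⁻¹ * z.im) • sliceEmb I := by
    rw [sphericalField_eq_smul_im, mul_smul, ← im_sliceEmb]
  refine ⟨_, fun hr => ?_, hX⟩
  rw [hr, zero_smul, sphericalField, inv_eq_zero] at hX
  exact hz (by simpa using hX)

variable {U : Set ℍq} {f : ℍq → ℍq}

theorem contDiffOn_comp_sliceEmb (hU : IsOpen U) (him : ∀ x ∈ U, x.im ≠ 0)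
    (hf : DifferentiableOn ℝ f U) (hCR : ∀ x ∈ U, cderivBar f x = 0) :
    ContDiffOn ℝ ∞ (f ∘ sliceEmb) (sliceEmb ⁻¹' U) := by
  let _ : Module ℂ ℍq := Module.compHom ℍq Quaternion.ofComplex.toRingHom
  have smul_def (z : ℂ) (q : ℍq) : z • q = sliceEmb z * q := rfl
  let _ : NormedSpace ℂ ℍq :=
    ⟨fun z q => by rw [smul_def, norm_mul, norm_sliceEmb]⟩
  have _ : IsScalarTower ℝ ℂ ℍq :=
    ⟨fun r z q => by rw [smul_def, smul_def, map_smul, smul_mul_assoc]⟩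
  refine contDiffOn_of_cauchyRiemann (hU.preimage sliceEmb.continuous)
    (hf.comp sliceEmb.differentiableOn (Set.mapsTo_preimage _ _)) fun z hz => ?_
  have hfz := (hf.differentiableAt (hU.mem_nhds hz)).hasFDerivAt.comp z sliceEmb.hasFDerivAt
  have hX := fderiv_sphericalField_of_cderivBar_eq_zero (him _ hz) (hCR _ hz)
  obtain ⟨r, hr, hXr⟩ := exists_sphericalField_sliceEmb_eq_smul (him _ hz)
  rw [hXr, map_smul, smul_mul_assoc] at hX
  have hone : sliceEmb 1 = 1 := map_one Quaternion.ofComplex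
  rw [hfz.fderiv, smul_def, ContinuousLinearMap.comp_apply, ContinuousLinearMap.comp_apply, hone]
  exact smul_right_injective ℍq hr hX

/-- The point `α + iβ` of the closed upper half-plane lying on the sphere of `x = α + Iβ`. -/
def sphereParam (x : ℍq) : ℂ := ⟨x.re, ‖x.im‖⟩

theorem contDiffOn_sphereParam (him : ∀ x ∈ U, x.im ≠ 0) : ContDiffOn ℝ ∞ sphereParam U := by
  have hre : ContDiff ℝ ∞ fun x : ℍq => x.re := by
    simpa [Quaternion.inner_def] using contDiff_id.inner ℝ (contDiff_const (c := (1 : ℍq)))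
  exact Complex.equivRealProdCLM.symm.contDiff.comp_contDiffOn
    (hre.contDiffOn.prodMk (contDiff_im.contDiffOn.norm ℝ him))

theorem contDiffOn_comp_star_sliceEmb (hstar : ∀ x ∈ U, star x ∈ U)
    (hf : ContDiffOn ℝ ∞ (f ∘ sliceEmb) (sliceEmb ⁻¹' U)) :
    ContDiffOn ℝ ∞ (fun z => f (star (sliceEmb z))) (sliceEmb ⁻¹' U) := by
  refine (hf.comp Complex.conjCLE.contDiff.contDiffOn fun z hz => ?_).congr fun z _ => ?_
  · simpa [← star_sliceEmb] using hstar _ hz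
  · simp [star_sliceEmb]

theorem IsCircular.star_mem (hU : IsCircular U) : ∀ x ∈ U, star x ∈ U :=
  fun x hx => hU x hx _ (by simp) (by simp)

theorem IsSlice.contDiffOn (hU : IsCircular U) (him : ∀ x ∈ U, x.im ≠ 0) (hs : IsSlice U f)
    (hf : ContDiffOn ℝ ∞ (f ∘ sliceEmb) (sliceEmb ⁻¹' U)) : ContDiffOn ℝ ∞ f U := by
  have hre (x : ℍq) : (sliceEmb (sphereParam x)).re = x.re := by
    simp [sliceEmb_apply, sphereParam]
  have him' (x : ℍq) : ‖(sliceEmb (sphereParam x)).im‖ = ‖x.im‖ := by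
    rw [im_sliceEmb, norm_smul, norm_sliceEmb]
    simp [sphereParam]
  have hmem : Set.MapsTo sphereParam U (sliceEmb ⁻¹' U) := fun x hx => hU x hx _ (hre x) (him' x)
  have hf' := contDiffOn_comp_star_sliceEmb hU.star_mem hf
  have hX : ContDiffOn ℝ ∞ (fun z => sphericalField (sliceEmb z)) (sliceEmb ⁻¹' U) :=
    (contDiffOn_sphericalField him).comp sliceEmb.contDiff.contDiffOn (Set.mapsTo_preimage _ _)
  have hv : ContDiffOn ℝ ∞ (fun z => svalue f (sliceEmb z)) (sliceEmb ⁻¹' U) := by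
    simp only [svalue_eq_smul]
    exact (hf.add hf').const_smul _
  have hd : ContDiffOn ℝ ∞ (fun z => sderiv' f (sliceEmb z)) (sliceEmb ⁻¹' U) :=
    hX.mul (hf.sub hf')
  have hζ := contDiffOn_sphereParam him
  exact ((hv.comp hζ hmem).add (contDiff_im.contDiffOn.mul (hd.comp hζ hmem))).congr fun x hx =>
    hs x hx _ (hmem hx) (hre x).symm (him' x).symm

theorem isOpen_setOf_im_ne_zero : IsOpen {x : ℍq | x.im ≠ 0} :=
  isOpen_ne_fun Quaternion.continuous_im continuous_const

theorem IsSliceRegular.contDiffAt (hf : IsSliceRegular U f) (hopen : IsOpen U)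
    (hcirc : IsCircular U) {x : ℍq} (hx : x ∈ U) (him : x.im ≠ 0) : ContDiffAt ℝ ∞ f x := by
  let V := U ∩ {x | x.im ≠ 0}
  have hV : IsOpen V := hopen.inter isOpen_setOf_im_ne_zero
  have hVcirc : IsCircular V := fun y hy z hre hnorm =>
    ⟨hcirc y hy.1 z hre hnorm, norm_ne_zero_iff.1 (hnorm ▸ norm_ne_zero_iff.2 hy.2)⟩
  have hslice : IsSlice V f := fun y hy z hz => hf.1 y hy.1 z hz.1
  have hsmooth := contDiffOn_comp_sliceEmb hV (fun _ hy => hy.2)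
    (hf.2.1.mono Set.inter_subset_left) fun y hy => hf.2.2 y hy.1 hy.2
  exact (hslice.contDiffOn hVcirc (fun _ hy => hy.2) hsmooth).contDiffAt (hV.mem_nhds ⟨hx, him⟩)

end Smoothness

theorem opCS_iterate_sprod_general {Ω : Set ℍq} (hopen : IsOpen Ω)
    (hstar : ∀ x ∈ Ω, star x ∈ Ω) {f g : ℍq → ℍq}
    (hf : ∀ x ∈ Ω, x.im ≠ 0 → ContDiffAt ℝ ∞ f x)
    (hfCR : ∀ x ∈ Ω, x.im ≠ 0 → cderivBar f x = 0)
    (hg : ∀ x ∈ Ω, x.im ≠ 0 → ContDiffAt ℝ ∞ g x)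
    (hgCR : ∀ x ∈ Ω, x.im ≠ 0 → cderivBar g x = 0) {k : ℕ} (hk : 1 ≤ k) :
    ∀ x ∈ Ω, x.im ≠ 0 →
      opCS^[k] (sprod f g) x =
        sprod (opCS^[k] f) (svalue g) x + sprod (svalue f) (opCS^[k] g) x
        + (1/2 : ℝ) •
          ((∑ h ∈ Finset.range k, (k-1).choose h •
              (sprod (sderiv' (opCS^[k-(h+1)] f)) (cderiv (opSC^[h] g)) x
                + sprod (cderiv (opSC^[h] f)) (sderiv' (opCS^[k-(h+1)] g)) x))
          + ∑ h ∈ Finset.Ico 1 k, (k-1).choose h •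
              (sprod (opCS^[k-h] f) (opSC^[h] g) x
                + sprod (opSC^[h] f) (opCS^[k-h] g) x)) := by
  intro x hxΩ hxim
  obtain ⟨n, rfl⟩ := Nat.exists_eq_add_of_le' hk
  let U := Ω ∩ {x | x.im ≠ 0}
  have hU : IsOpen U := hopen.inter isOpen_setOf_im_ne_zero
  have hUstar : ∀ x ∈ U, star x ∈ U := fun x hx => ⟨hstar x hx.1, by simpa using hx.2⟩
  have him : ∀ x ∈ U, x.im ≠ 0 := fun x hx => hx.2
  have hfU : ContDiffOn ℝ ∞ f U := fun x hx => (hf x hx.1 hx.2).contDiffWithinAt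
  have hgU : ContDiffOn ℝ ∞ g U := fun x hx => (hg x hx.1 hx.2).contDiffWithinAt
  have hfCR' : ∀ x ∈ U, cderivBar f x = 0 := fun x hx => hfCR x hx.1 hx.2
  have hgCR' : ∀ x ∈ U, cderivBar g x = 0 := fun x hx => hgCR x hx.1 hx.2
  have hx : x ∈ U := ⟨hxΩ, hxim⟩
  have hfd := hfU.differentiableOn (by simp)
  have hgd := hgU.differentiableOn (by simp)
  rw [opCS_iterate_succ_sprod_of_contDiffOn hU hUstar him hfU hgU n hx, smul_add,
    Finset.smul_sum, Finset.smul_sum]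
  congr 2
  · refine Finset.sum_congr rfl fun h _ => ?_
    rw [sprod_of_eqOn_const_smul_right hUstar _
        (cderiv_opSC_iterate_svalue_eqOn hU hUstar him hgd hgCR' h) hx,
      sprod_of_eqOn_const_smul_left hUstar
        (cderiv_opSC_iterate_svalue_eqOn hU hUstar him hfd hfCR' h) _ hx,
      ← smul_add, smul_comm, Nat.add_sub_cancel, Nat.add_sub_add_right]
  · refine Finset.sum_congr rfl fun h hh => ?_
    obtain ⟨hpos, hlt⟩ := Finset.mem_Ico.1 hh
    rw [sprod_of_eqOn_const_smul_right hUstar _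
        (opSC_iterate_svalue_eqOn hU hUstar him hgd hgCR' (Nat.one_le_iff_ne_zero.1 hpos)) hx,
      sprod_of_eqOn_const_smul_left hUstar
        (opSC_iterate_svalue_eqOn hU hUstar him hfd hfCR' (Nat.one_le_iff_ne_zero.1 hpos)) _ hx,
      ← smul_add, smul_comm, Nat.add_sub_cancel, Nat.sub_add_comm (Nat.lt_succ_iff.1 hlt)]

/-- general formula for `(∂_c∂_s)^k` of a slice product. -/
theorem opCS_iterate_sprod (Ω : Set ℍq) (hopen : IsOpen Ω) (hcirc : IsCircular Ω)
    (f g : ℍq → ℍq) (hf : IsSliceRegular Ω f) (hg : IsSliceRegular Ω g)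
    (k : ℕ) (hk : 1 ≤ k) :
    ∀ x ∈ Ω, x.im ≠ 0 →
      opCS^[k] (sprod f g) x =
        sprod (opCS^[k] f) (svalue g) x + sprod (svalue f) (opCS^[k] g) x
        + (1/2 : ℝ) •
          ((∑ h ∈ Finset.range k, (k-1).choose h •
              (sprod (sderiv' (opCS^[k-(h+1)] f)) (cderiv (opSC^[h] g)) x
                + sprod (cderiv (opSC^[h] f)) (sderiv' (opCS^[k-(h+1)] g)) x))
          + ∑ h ∈ Finset.Ico 1 k, (k-1).choose h •
              (sprod (opCS^[k-h] f) (opSC^[h] g) x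
                + sprod (opSC^[h] f) (opCS^[k-h] g) x)) :=
  opCS_iterate_sprod_general hopen hcirc.star_mem (fun _ => hf.contDiffAt hopen hcirc) hf.2.2
    (fun _ => hg.contDiffAt hopen hcirc) hg.2.2 hk
end
end

section
/- Let q₀ ∈ ℍ ∖ ℝ and p ≥ 1. Then for all 0 ≤ k ≤ p, ((∂_s∂_c)^k Δ_{q₀}^p)(q₀) equals 2·k! if k = p and equals 0 otherwise. -/
noncomputable section

open Quaternion

/-!
In the coordinates `(α, t) = (α, β²)` a slice function is `f = U(α, t) + I β V(α, t)`, and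
`∂_s∂_c f = (∂_α V - 2 ∂_t U) / 2`, again a slice function but with no `I β` component. If `f` is
slice regular, the Cauchy–Riemann equation `∂_α V = -2 ∂_t U` turns this into `-2 ∂_t U`, while
every further application of `∂_s∂_c` is just `-∂_t`; hence `(∂_s∂_c)^k f = 2 (-∂_t)^k U` for
`k ≥ 1`. Since `Δ_{q₀}` is real on the line `α = Re q₀`, where it equals `|Im q₀|² - t`, its
`p`-th power has `U = (|Im q₀|² - t)^p` there.
-/

open scoped ContDiff

section Stems

variable {E : Type*} [NormedAddCommGroup E] [NormedSpace ℝ E]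

/-- The partial derivative in the first variable of a function on `ℝ × ℝ`. -/
def pderivFst (U : ℝ × ℝ → E) (z : ℝ × ℝ) : E := fderiv ℝ U z (1, 0)

/-- The partial derivative in the second variable of a function on `ℝ × ℝ`. -/
def pderivSnd (U : ℝ × ℝ → E) (z : ℝ × ℝ) : E := fderiv ℝ U z (0, 1)

/-- A smooth pair `(U, V)` for which the stem function `F₀(α, β) = U(α, β²)`,
`F₁(α, β) = β V(α, β²)` is holomorphic: the last two fields are the Cauchy–Riemann equations
`∂_α F₁ = -∂_β F₀` and `∂_α F₀ = ∂_β F₁` in the coordinates `(α, β²)`. -/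
structure IsRegularStem (U V : ℝ × ℝ → E) : Prop where
  contDiff_left : ContDiff ℝ ∞ U
  contDiff_right : ContDiff ℝ ∞ V
  pderivFst_right : ∀ z, pderivFst V z = (-2 : ℝ) • pderivSnd U z
  pderivFst_left : ∀ z, pderivFst U z = V z + (2 * z.2) • pderivSnd V z

lemma contDiff_pderivSnd {U : ℝ × ℝ → E} (hU : ContDiff ℝ ∞ U) :
    ContDiff ℝ ∞ (pderivSnd U) :=
  (hU.fderiv_right (by simp)).clm_apply contDiff_const

lemma deriv_prodMk_eq_pderivSnd {U : ℝ × ℝ → E} (hU : Differentiable ℝ U) (a : ℝ) :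
    deriv (fun t => U (a, t)) = fun t => pderivSnd U (a, t) := by
  funext t
  exact ((hU (a, t)).hasFDerivAt.comp_hasDerivAt t
    ((hasDerivAt_const t a).prodMk (hasDerivAt_id t))).deriv

lemma isRegularStem_const (c : E) : IsRegularStem (fun _ => c) 0 where
  contDiff_left := contDiff_const
  contDiff_right := contDiff_const
  pderivFst_right z := by simp [pderivFst, pderivSnd]
  pderivFst_left z := by simp [pderivFst, pderivSnd]

-- The stem of the product `(A + I β B)(U + I β V)`, with `I² = -1` and `z.2 = β²`.
lemma IsRegularStem.smul {A B : ℝ × ℝ → ℝ} {U V : ℝ × ℝ → E}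
    (hAB : IsRegularStem A B) (hUV : IsRegularStem U V) :
    IsRegularStem (fun z => A z • U z - (z.2 * B z) • V z) (fun z => A z • V z + B z • U z) := by
  have hA := hAB.contDiff_left
  have hB := hAB.contDiff_right
  have hU := hUV.contDiff_left
  have hV := hUV.contDiff_right
  have dA z := (hA.differentiable (by simp) z).hasFDerivAt
  have dB z := (hB.differentiable (by simp) z).hasFDerivAt
  have dU z := (hU.differentiable (by simp) z).hasFDerivAt
  have dV z := (hV.differentiable (by simp) z).hasFDerivAt
  have fderiv_left (z v : ℝ × ℝ) :
      fderiv ℝ (fun z => A z • U z - (z.2 * B z) • V z) z v =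
        A z • fderiv ℝ U z v + fderiv ℝ A z v • U z
          - ((z.2 * B z) • fderiv ℝ V z v + (z.2 * fderiv ℝ B z v + B z * v.2) • V z) :=
    congr($((((dA z).smul (dU z)).sub ((hasFDerivAt_snd.mul (dB z)).smul (dV z))).fderiv) v)
  have fderiv_right (z v : ℝ × ℝ) :
      fderiv ℝ (fun z => A z • V z + B z • U z) z v =
        A z • fderiv ℝ V z v + fderiv ℝ A z v • V z
          + (B z • fderiv ℝ U z v + fderiv ℝ B z v • U z) :=
    congr($((((dA z).smul (dV z)).add ((dB z).smul (dU z))).fderiv) v)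
  refine ⟨by fun_prop, by fun_prop, fun z => ?_, fun z => ?_⟩
  all_goals
    have hA₁ := hAB.pderivFst_left z
    have hB₁ := hAB.pderivFst_right z
    have hU₁ := hUV.pderivFst_left z
    have hV₁ := hUV.pderivFst_right z
    simp only [pderivFst, pderivSnd, smul_eq_mul] at hA₁ hB₁ hU₁ hV₁ ⊢
    rw [fderiv_left, fderiv_right, hA₁, hB₁, hU₁, hV₁]
    module

end Stems

/-- The real part as a continuous linear functional. -/
def reCLM : ℍq →L[ℝ] ℝ where
  toFun x := x.re
  map_add' _ _ := rfl
  map_smul' _ _ := rfl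
  cont := Quaternion.continuous_re

/-- The imaginary part as a continuous linear map. -/
def imCLM : ℍq →L[ℝ] ℍq where
  toFun x := x.im
  map_add' := Quaternion.im_add
  map_smul' c x := Quaternion.im_smul x c
  cont := Quaternion.continuous_im

/-- The coordinates `(α, β²)` of the quaternion `α + Iβ`. Squaring `β` makes them smooth across
the real axis. -/
def stemCoord (x : ℍq) : ℝ × ℝ := (x.re, ‖x.im‖ ^ 2)

/-- The slice function `α + Iβ ↦ U(α, β²) + I β V(α, β²)`. -/
def sliceFun (U V : ℝ × ℝ → ℍq) (x : ℍq) : ℍq := U (stemCoord x) + x.im * V (stemCoord x)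

/-- The set `ℍ ∖ ℝ`. -/
def nonReal : Set ℍq := {x | x.im ≠ 0}

lemma isOpen_nonReal : IsOpen nonReal :=
  isOpen_ne_fun Quaternion.continuous_im continuous_const

lemma im_mul_im (x : ℍq) : x.im * x.im = ((-‖x.im‖ ^ 2 : ℝ) : ℍq) := by
  rw [← sq, Quaternion.im_sq, Quaternion.normSq_eq_norm_mul_self, ← sq, Quaternion.coe_neg]

lemma mul_sliceFun (A B : ℝ × ℝ → ℝ) (U V : ℝ × ℝ → ℍq) (x : ℍq) :
    ((A (stemCoord x) : ℍq) + B (stemCoord x) • x.im) * sliceFun U V x =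
      sliceFun (fun z => A z • U z - (z.2 * B z) • V z) (fun z => A z • V z + B z • U z) x := by
  have him (w : ℍq) : x.im * (x.im * w) = -(stemCoord x).2 • w := by
    rw [← mul_assoc, im_mul_im, Quaternion.coe_mul_eq_smul, stemCoord]
  simp only [sliceFun, add_mul, mul_add, Quaternion.coe_mul_eq_smul, smul_mul_assoc,
    mul_smul_comm, him]
  module

lemma norm_im_smul_qJ {x : ℍq} (hx : x ∈ nonReal) : ‖x.im‖ • qJ x = x.im := by
  rw [qJ, smul_smul, mul_inv_cancel₀ (norm_ne_zero_iff.2 hx), one_smul]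

lemma qJ_mul_qJ {x : ℍq} (hx : x ∈ nonReal) : qJ x * qJ x = -1 := by
  have hx' : ‖x.im‖ ≠ 0 := norm_ne_zero_iff.2 hx
  rw [qJ, smul_mul_smul_comm, im_mul_im, Quaternion.smul_coe, ← Quaternion.coe_one,
    ← Quaternion.coe_neg]
  congr 1
  field_simp

lemma hasFDerivAt_stemCoord (x : ℍq) :
    HasFDerivAt stemCoord (reCLM.prod (2 • (innerSL ℝ x.im).comp imCLM)) x :=
  reCLM.hasFDerivAt.prodMk imCLM.hasFDerivAt.norm_sq

section Derivatives

variable {U V : ℝ × ℝ → ℍq}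

lemma fderiv_sliceFun_apply (hU : Differentiable ℝ U) (hV : Differentiable ℝ V) (x v : ℍq) :
    fderiv ℝ (sliceFun U V) x v =
      fderiv ℝ U (stemCoord x) (v.re, 2 * inner ℝ x.im v.im)
        + (x.im * fderiv ℝ V (stemCoord x) (v.re, 2 * inner ℝ x.im v.im)
          + v.im * V (stemCoord x)) := by
  have hUx := (hU (stemCoord x)).hasFDerivAt.comp x (hasFDerivAt_stemCoord x)
  have hVx := (hV (stemCoord x)).hasFDerivAt.comp x (hasFDerivAt_stemCoord x)
  have h := hUx.add ((imCLM.hasFDerivAt (x := x)).mul' hVx)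
  have hv : (reCLM.prod (2 • (innerSL ℝ x.im).comp imCLM)) v
      = (v.re, 2 * inner ℝ x.im v.im) :=
    Prod.ext rfl (two_nsmul _ |>.trans (two_mul _).symm)
  rw [← hv]
  exact congr($(h.fderiv) v)

lemma fderiv_sliceFun_one (hU : Differentiable ℝ U) (hV : Differentiable ℝ V) (x : ℍq) :
    fderiv ℝ (sliceFun U V) x 1 = sliceFun (pderivFst U) (pderivFst V) x := by
  simp [fderiv_sliceFun_apply hU hV, sliceFun, pderivFst]

lemma fderiv_sliceFun_qJ (hU : Differentiable ℝ U) (hV : Differentiable ℝ V)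
    {x : ℍq} (hx : x ∈ nonReal) :
    fderiv ℝ (sliceFun U V) x (qJ x) =
      (2 * ‖x.im‖) • sliceFun (pderivSnd U) (pderivSnd V) x + qJ x * V (stemCoord x) := by
  have hre : (qJ x).re = 0 := by simp [qJ]
  have him : (qJ x).im = qJ x := by simp [qJ]
  have hinner : inner ℝ x.im (qJ x) = ‖x.im‖ := by
    rw [qJ, real_inner_smul_right, real_inner_self_eq_norm_sq]
    field_simp [norm_ne_zero_iff.2 hx]
  have hdir : ((0, 2 * ‖x.im‖) : ℝ × ℝ) = (2 * ‖x.im‖) • (0, 1) := by simp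
  rw [fderiv_sliceFun_apply hU hV, hre, him, hinner, hdir, map_smul, map_smul, sliceFun, pderivSnd,
    pderivSnd, mul_smul_comm, smul_add, add_assoc]

lemma cderiv_sliceFun (hU : Differentiable ℝ U) (hV : Differentiable ℝ V) :
    nonReal.EqOn (cderiv (sliceFun U V)) (sliceFun
      (fun z => (1 / 2 : ℝ) • (pderivFst U z + V z + (2 * z.2) • pderivSnd V z))
      (fun z => (1 / 2 : ℝ) • (pderivFst V z - (2 : ℝ) • pderivSnd U z))) := by
  intro x hx
  have hJ (w : ℍq) : qJ x * (qJ x * w) = -w := by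
    rw [← mul_assoc, qJ_mul_qJ hx, neg_one_mul]
  have hsq : (stemCoord x).2 = ‖x.im‖ ^ 2 := rfl
  have him : x.im = ‖x.im‖ • qJ x := (norm_im_smul_qJ hx).symm
  rw [cderiv, fderiv_sliceFun_one hU hV, fderiv_sliceFun_qJ hU hV hx]
  simp only [sliceFun, hsq]
  generalize ‖x.im‖ = r at him ⊢
  simp only [him, mul_add, mul_sub, smul_mul_assoc, mul_smul_comm, hJ]
  module

end Derivatives

lemma sderiv'_sliceFun (U V : ℝ × ℝ → ℍq) :
    nonReal.EqOn (sderiv' (sliceFun U V)) (sliceFun V 0) := by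
  intro x hx
  have hx' : (2 : ℍq) * x.im ≠ 0 := by
    rw [two_mul, ← two_smul ℝ]
    exact smul_ne_zero two_ne_zero hx
  have hstar : stemCoord (star x) = stemCoord x := by simp [stemCoord]
  have hdiff : sliceFun U V x - sliceFun U V (star x) = 2 * x.im * V (stemCoord x) := by
    simp only [sliceFun, hstar, Quaternion.im_star]
    noncomm_ring
  rw [sderiv', hdiff, inv_mul_cancel_left₀ hx']
  simp [sliceFun]

lemma cderiv_eqOn_s8 {f g : ℍq → ℍq} {s : Set ℍq} (hs : IsOpen s) (h : s.EqOn f g) :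
    s.EqOn (cderiv f) (cderiv g) := by
  intro x hx
  rw [cderiv, cderiv, (h.eventuallyEq_of_mem (hs.mem_nhds hx)).fderiv_eq]

lemma star_mem_nonReal {x : ℍq} (hx : x ∈ nonReal) : star x ∈ nonReal := by
  simpa [nonReal] using hx

lemma sderiv'_eqOn_s8 {f g : ℍq → ℍq} (h : nonReal.EqOn f g) :
    nonReal.EqOn (sderiv' f) (sderiv' g) := by
  intro x hx
  rw [sderiv', sderiv', h hx, h (star_mem_nonReal hx)]

lemma opSC_eqOn {U V : ℝ × ℝ → ℍq} (hU : Differentiable ℝ U) (hV : Differentiable ℝ V)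
    {f : ℍq → ℍq} (hf : nonReal.EqOn f (sliceFun U V)) :
    nonReal.EqOn (opSC f)
      (sliceFun (fun z => (1 / 2 : ℝ) • (pderivFst V z - (2 : ℝ) • pderivSnd U z)) 0) :=
  (sderiv'_eqOn_s8 ((cderiv_eqOn_s8 isOpen_nonReal hf).trans (cderiv_sliceFun hU hV))).trans
    (sderiv'_sliceFun _ _)

lemma opSC_iterate_of_eqOn_sliceFun_zero {U : ℝ × ℝ → ℍq} (hU : ContDiff ℝ ∞ U)
    {f : ℍq → ℍq} (hf : nonReal.EqOn f (sliceFun U 0)) (k : ℕ) {x : ℍq} (hx : x ∈ nonReal) :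
    opSC^[k] f x = (-1 : ℝ) ^ k • iteratedDeriv k (fun t => U (x.re, t)) (‖x.im‖ ^ 2) := by
  induction k generalizing U f with
  | zero => simp [hf hx, sliceFun, stemCoord]
  | succ k ih =>
    have hUd : Differentiable ℝ U := hU.differentiable (by simp)
    have hstep : nonReal.EqOn (opSC f) (sliceFun (-pderivSnd U) 0) := by
      convert opSC_eqOn hUd (differentiable_const 0) hf using 2
      funext z
      simp [pderivFst]
    rw [Function.iterate_succ_apply, ih (contDiff_pderivSnd hU).neg hstep, iteratedDeriv_succ',
      deriv_prodMk_eq_pderivSnd hUd]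
    simp only [iteratedDeriv_fun_neg, pow_succ]
    module

theorem opSC_iterate_succ_of_isRegularStem {U V : ℝ × ℝ → ℍq} (hUV : IsRegularStem U V)
    {f : ℍq → ℍq} (hf : nonReal.EqOn f (sliceFun U V)) (k : ℕ) {x : ℍq} (hx : x ∈ nonReal) :
    opSC^[k + 1] f x =
      (2 * (-1 : ℝ) ^ (k + 1)) •
        iteratedDeriv (k + 1) (fun t => U (x.re, t)) (‖x.im‖ ^ 2) := by
  have hUd : Differentiable ℝ U := hUV.contDiff_left.differentiable (by simp)
  have hstep : nonReal.EqOn (opSC f) (sliceFun ((-2 : ℝ) • pderivSnd U) 0) := by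
    convert opSC_eqOn hUd (hUV.contDiff_right.differentiable (by simp)) hf using 2
    funext z
    rw [hUV.pderivFst_right, Pi.smul_apply]
    module
  rw [Function.iterate_succ_apply,
    opSC_iterate_of_eqOn_sliceFun_zero
      ((contDiff_pderivSnd hUV.contDiff_left).const_smul (-2 : ℝ)) hstep k hx,
    iteratedDeriv_succ', deriv_prodMk_eq_pderivSnd hUd]
  simp only [iteratedDeriv_fun_const_smul_field, pow_succ]
  module

lemma isRegularStem_quadratic (a b : ℝ) :
    IsRegularStem (fun z => (z.1 - a) ^ 2 - z.2 + b) (fun z => 2 * (z.1 - a)) := by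
  have hα (z : ℝ × ℝ) := (hasFDerivAt_fst (𝕜 := ℝ) (p := z)).sub_const a
  have hA (z v : ℝ × ℝ) :
      fderiv ℝ (fun z : ℝ × ℝ => (z.1 - a) ^ 2 - z.2 + b) z v = 2 * (z.1 - a) * v.1 - v.2 := by
    have h := ((((hα z).pow 2).sub hasFDerivAt_snd).add_const b).fderiv
    simpa using congr($h v)
  have hB (z v : ℝ × ℝ) : fderiv ℝ (fun z : ℝ × ℝ => 2 * (z.1 - a)) z v = 2 * v.1 := by
    simpa using congr($(((hα z).const_mul 2).fderiv) v)
  refine ⟨by fun_prop, by fun_prop, fun z => ?_, fun z => ?_⟩ <;>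
    simp only [pderivFst, pderivSnd, hA, hB, smul_eq_mul] <;> ring

lemma Delta_eq_coe_add_smul_im (q₀ x : ℍq) :
    Delta q₀ x = (((x.re - q₀.re) ^ 2 - ‖x.im‖ ^ 2 + ‖q₀.im‖ ^ 2 : ℝ) : ℍq)
      + (2 * (x.re - q₀.re)) • x.im := by
  have htwo : (2 : ℍq) * q₀.re = ((2 * q₀.re : ℝ) : ℍq) := by push_cast; rfl
  simp only [Delta, htwo, sq ‖_‖, ← Quaternion.normSq_eq_norm_mul_self, Quaternion.normSq_def']
  ext <;> simp [sq] <;> ring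

lemma exists_isRegularStem_Delta_pow (q₀ : ℍq) (p : ℕ) :
    ∃ U V : ℝ × ℝ → ℍq, IsRegularStem U V ∧ (fun x => Delta q₀ x ^ p) = sliceFun U V ∧
      ∀ t, U (q₀.re, t) = (‖q₀.im‖ ^ 2 - t) ^ p • (1 : ℍq) := by
  induction p with
  | zero => exact ⟨_, _, isRegularStem_const 1, by ext1 x; simp [sliceFun], by simp⟩
  | succ p ih =>
    obtain ⟨U, V, hUV, hpow, hline⟩ := ih
    refine ⟨_, _, (isRegularStem_quadratic q₀.re (‖q₀.im‖ ^ 2)).smul hUV, ?_, fun t => ?_⟩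
    · funext x
      rw [← mul_sliceFun, ← hpow, pow_succ']
      exact congr($(Delta_eq_coe_add_smul_im q₀ x) * Delta q₀ x ^ p)
    · simp only [hline, sub_self]
      module

lemma iteratedDeriv_const_sub_pow (b : ℝ) (p k : ℕ) (t : ℝ) :
    iteratedDeriv k (fun t => (b - t) ^ p) t =
      (-1) ^ k * (p.descFactorial k * (b - t) ^ (p - k)) := by
  simp [iteratedDeriv_comp_const_sub (f := (· ^ p))]

theorem opSC_iterate_succ_Delta_pow_of_re_eq {q₀ x : ℍq} (hx : x ∈ nonReal) (hre : x.re = q₀.re)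
    (p k : ℕ) :
    opSC^[k + 1] (fun x => Delta q₀ x ^ p) x =
      (2 * (p.descFactorial (k + 1) * (‖q₀.im‖ ^ 2 - ‖x.im‖ ^ 2) ^ (p - (k + 1))) : ℝ) := by
  obtain ⟨U, V, hUV, hpow, hline⟩ := exists_isRegularStem_Delta_pow q₀ p
  have hsign : (-1 : ℝ) ^ (k + 1) * (-1) ^ (k + 1) = 1 := by rw [← mul_pow]; simp
  rw [hpow, opSC_iterate_succ_of_isRegularStem hUV (Set.eqOn_refl _ _) k hx]
  simp only [hre, hline]
  rw [iteratedDeriv_smul_const (by fun_prop), iteratedDeriv_const_sub_pow, smul_smul,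
    ← Quaternion.coe_mul_eq_smul, mul_one]
  congr 1
  linear_combination
    2 * (p.descFactorial (k + 1) * (‖q₀.im‖ ^ 2 - ‖x.im‖ ^ 2) ^ (p - (k + 1))) * hsign

theorem opSC_iterate_Delta_pow_general {q₀ x : ℍq} (hx : x.im ≠ 0) (hre : x.re = q₀.re)
    (him : ‖x.im‖ = ‖q₀.im‖) {p : ℕ} (hp : 1 ≤ p) (k : ℕ) :
    opSC^[k] (fun x => Delta q₀ x ^ p) x = if k = p then 2 * (k.factorial : ℍq) else 0 := by
  rcases k with _ | k
  · have hp₀ : p ≠ 0 := by omega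
    simp [Delta_eq_coe_add_smul_im, hre, him, hp₀, hp₀.symm]
  · rw [opSC_iterate_succ_Delta_pow_of_re_eq hx hre, him, sub_self]
    rcases lt_trichotomy (k + 1) p with hlt | rfl | hgt
    · rw [if_neg hlt.ne, zero_pow (Nat.sub_ne_zero_of_lt hlt), mul_zero, mul_zero,
        Quaternion.coe_zero]
    · rw [if_pos rfl, Nat.descFactorial_self, Nat.sub_self, pow_zero, mul_one]
      push_cast
      rfl
    · rw [if_neg hgt.ne', Nat.descFactorial_of_lt hgt, Nat.cast_zero, zero_mul, mul_zero,
        Quaternion.coe_zero]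

/-- `((∂_s∂_c)^k Δ_{q₀}^p)(q₀) = 2·k!` if `k = p`, `0` otherwise. -/
theorem opSC_iterate_Delta_pow (q₀ : ℍq) (hq₀ : q₀.im ≠ 0)
    (p k : ℕ) (hp : 1 ≤ p) (hk : k ≤ p) :
    opSC^[k] (fun x => Delta q₀ x ^ p) q₀
      = if k = p then 2 * (k.factorial : ℍq) else 0 :=
  opSC_iterate_Delta_pow_general hq₀ rfl rfl hp k
end
end
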